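/- Let 0 ≤ q ≤ 1, η > 0, θ ≥ 0, τ ≥ 0 and fix s > 0. Let μ_s be a probability measure on ℝ with finite moments of all orders such that ∫ p_m(y;s) p_n(y;s) μ_s(dy) = 0 whenever m ≠ n. If x belongs to the topological support of μ_s (i.e. every open neighborhood of x has positive μ_s-measure), then Π_{j=0}^{n} A_j(x,s) ≥ 0 for every n ≥ 0. -/

import Mathlib

/-- `[n]_q = 1 + q + ⋯ + q^{n-1}`. -/
noncomputable def qnum (q : ℝ) (n : ℕ) : ℝ := ∑ i ∈ Finset.range n, q ^ i

/-- `[n]_q! = [1]_q [2]_q ⋯ [n]_q`. -/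
noncomputable def qfact (q : ℝ) (n : ℕ) : ℝ := ∏ i ∈ Finset.range n, qnum q (i + 1)

/-- q-binomial coefficient `[n choose k]_q`, with the convention that it is `0` for `k > n`. -/
noncomputable def qbinom (q : ℝ) (n k : ℕ) : ℝ :=
  if k ≤ n then qfact q n / (qfact q (n - k) * qfact q k) else 0

/-- `a_n = η⁻¹ + θ[n]_q + [n]_q² ητ`. -/
noncomputable def aCoef (η θ τ q : ℝ) (n : ℕ) : ℝ :=
  η⁻¹ + θ * qnum q n + (qnum q n) ^ 2 * η * τ

/-- `b_n(t) = (tη + θ + ([n]_q + [n-1]_q)ητ)[n]_q`. -/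
noncomputable def bCoef (η θ τ q t : ℝ) (n : ℕ) : ℝ :=
  (t * η + θ + (qnum q n + qnum q (n - 1)) * η * τ) * qnum q n

/-- `c_n(t) = η(t + τ[n-1]_q)[n]_q`. -/
noncomputable def cCoef (η τ q t : ℝ) (n : ℕ) : ℝ :=
  η * (t + τ * qnum q (n - 1)) * qnum q n

/-- `A_n(x,s) = a_n + q^n x - sη q^n [n]_q`. -/
noncomputable def ACoef (η θ τ q x s : ℝ) (n : ℕ) : ℝ :=
  aCoef η θ τ q n + q ^ n * x - s * η * q ^ n * qnum q n

/-- `x_k(s) = ((sη q^k - θ)[k]_q - η⁻¹ - ητ[k]_q²)/q^k`, the zero of `x ↦ A_k(x,s)`. -/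
noncomputable def xPt (η θ τ q s : ℝ) (k : ℕ) : ℝ :=
  ((s * η * q ^ k - θ) * qnum q k - η⁻¹ - η * τ * (qnum q k) ^ 2) / q ^ k

open MeasureTheory Polynomial in
theorem aux_poly_int (μ : Measure ℝ) (hprob : IsProbabilityMeasure μ)
    (hmom : ∀ n : ℕ, Integrable (fun y : ℝ => |y| ^ n) μ) (P : Polynomial ℝ) :
    Integrable (fun y => P.eval y) μ := by
  induction P using Polynomial.induction_on' with
  | add p q hp hq => simp only [Polynomial.eval_add]; exact hp.add hq
  | monomial n a =>
    simp only [Polynomial.eval_monomial]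
    apply Integrable.const_mul
    refine (hmom n).mono (by fun_prop) ?_
    filter_upwards with y
    simp

/-- weights of the birth and death chain -/
noncomputable def auxpi (a c : ℕ → ℝ) (n : ℕ) : ℝ := ∏ i ∈ Finset.range n, (a i / c (i + 1))

theorem auxpi_zero (a c : ℕ → ℝ) : auxpi a c 0 = 1 := by simp [auxpi]

theorem auxpi_succ (a c : ℕ → ℝ) (hc : ∀ n, 0 < c (n + 1)) (n : ℕ) :
    c (n + 1) * auxpi a c (n + 1) = a n * auxpi a c n := by
  have := (hc n).ne'
  simp only [auxpi, Finset.prod_range_succ]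
  field_simp

theorem auxpi_pos (a c : ℕ → ℝ) (ha : ∀ n, 0 < a n) (hc : ∀ n, 0 < c (n + 1)) (n : ℕ) :
    0 < auxpi a c n := Finset.prod_pos fun i _ => div_pos (ha i) (hc i)

theorem aux_flux (a c : ℕ → ℝ) (hc : ∀ n, 0 < c (n + 1)) (hc0 : c 0 = 0) (z : ℝ) (r : ℕ → ℝ)
    (hrec : ∀ n, z * r n = a n * (r n - r (n + 1)) + c n * (r n - r (n - 1))) (n : ℕ) :
    z * ∑ k ∈ Finset.range (n + 1), auxpi a c k * r k
      = a n * auxpi a c n * (r n - r (n + 1)) := by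
  induction n with
  | zero =>
    have := hrec 0
    simp [auxpi_zero, hc0] at this ⊢
    linarith
  | succ n ih =>
    rw [Finset.sum_range_succ, mul_add, ih]
    have h1 := hrec (n + 1)
    have h2 := auxpi_succ a c hc n
    simp only [Nat.add_sub_cancel] at h1
    linear_combination auxpi a c (n + 1) * h1 - (r n - r (n+1)) * h2

/-- positivity and monotonicity to the left of the origin -/
theorem aux_mono (a c : ℕ → ℝ) (ha : ∀ n, 0 < a n) (hc : ∀ n, 0 < c (n + 1)) (hc0 : c 0 = 0)
    (z w : ℝ) (hz : 0 ≤ z) (hzw : z ≤ w) (r t : ℕ → ℝ) (hr0 : r 0 = 1) (ht0 : t 0 = 1)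
    (hrec : ∀ n, (-z) * r n = a n * (r n - r (n + 1)) + c n * (r n - r (n - 1)))
    (htec : ∀ n, (-w) * t n = a n * (t n - t (n + 1)) + c n * (t n - t (n - 1))) (n : ℕ) :
    (1 ≤ r n ∧ r n ≤ t n) ∧ (0 ≤ r (n + 1) - r n ∧ r (n + 1) - r n ≤ t (n + 1) - t n) := by
  induction n with
  | zero =>
    have h1 := hrec 0
    have h2 := htec 0
    simp [hr0, ht0, hc0] at h1 h2 ⊢
    have := ha 0
    refine ⟨?_, ?_⟩
    · by_contra h; push Not at h; nlinarith
    · by_contra h; push Not at h; nlinarith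
  | succ n ih =>
    obtain ⟨⟨i1, i2⟩, i3, i4⟩ := ih
    have h1 := hrec (n + 1)
    have h2 := htec (n + 1)
    simp only [Nat.add_sub_cancel] at h1 h2
    have hA := ha (n + 1)
    have hC := hc n
    have j1 : 1 ≤ r (n + 1) := by linarith
    have j2 : r (n + 1) ≤ t (n + 1) := by linarith
    refine ⟨⟨j1, j2⟩, ?_, ?_⟩
    · have e : a (n+1) * (r (n+1+1) - r (n+1)) = c (n+1) * (r (n+1) - r n) + z * r (n+1) := by
        linarith
      have : 0 ≤ a (n+1) * (r (n+1+1) - r (n+1)) := by rw [e]; positivity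
      exact nonneg_of_mul_nonneg_right this hA
    · have e : a (n+1) * (r (n+1+1) - r (n+1)) = c (n+1) * (r (n+1) - r n) + z * r (n+1) := by
        linarith
      have e' : a (n+1) * (t (n+1+1) - t (n+1)) = c (n+1) * (t (n+1) - t n) + w * t (n+1) := by
        linarith
      have k1 : c (n+1) * (r (n+1) - r n) ≤ c (n+1) * (t (n+1) - t n) :=
        mul_le_mul_of_nonneg_left i4 hC.le
      have k2 : z * r (n+1) ≤ w * t (n+1) := mul_le_mul hzw j2 (by linarith) (by linarith)
      exact le_of_mul_le_mul_left (by linarith) hA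

theorem aux_div (a c : ℕ → ℝ) (ha : ∀ n, 0 < a n) (hc : ∀ n, 0 < c (n + 1)) (hc0 : c 0 = 0)
    (K : ℝ) (hK : 0 < K) (haK : ∀ n : ℕ, a n ≤ (K * (n + 1)) ^ 2)
    (hcK : ∀ n : ℕ, c (n + 1) ≤ (K * (n + 1)) ^ 2)
    (z : ℝ) (hz : 0 < z) (r : ℕ → ℝ) (hr0 : r 0 = 1)
    (hrec : ∀ n, (-z) * r n = a n * (r n - r (n + 1)) + c n * (r n - r (n - 1))) (B : ℝ) :
    ∃ M, B < ∑ n ∈ Finset.range M, auxpi a c n * r n ^ 2 := by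
  have hm := aux_mono a c ha hc hc0 z z hz.le le_rfl r r hr0 hr0 hrec hrec
  have hpi := auxpi_pos a c ha hc
  have key : ∀ n : ℕ, (2 / K) * (1 / ((n : ℝ) + 1)) ≤
      (auxpi a c n * r n ^ 2 + auxpi a c (n + 1) * r (n + 1) ^ 2) / 2
        + (1 / z) * (1 / r n - 1 / r (n + 1)) := by
    intro n
    have h1 := (hm n).1.1
    have h2 := (hm (n+1)).1.1
    have hN : 0 < K * ((n:ℝ) + 1) := by positivity
    set N := K * ((n:ℝ) + 1) with hNdef
    set X := a n * auxpi a c n * r n * r (n + 1) with hX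
    have hXpos : 0 < X := by
      have := ha n; have := hpi n; positivity
    have f1 : 1 / X ≤ (1 / z) * (1 / r n - 1 / r (n + 1)) := by
      have hfl := aux_flux a c hc hc0 (-z) r hrec n
      have hS : 1 ≤ ∑ k ∈ Finset.range (n + 1), auxpi a c k * r k := by
        rw [Finset.sum_range_succ']
        rw [auxpi_zero, hr0]
        have : 0 ≤ ∑ k ∈ Finset.range n, auxpi a c (k+1) * r (k+1) :=
          Finset.sum_nonneg fun k _ => mul_nonneg (hpi _).le (by linarith [(hm (k+1)).1.1])
        linarith
      have hge : z ≤ a n * auxpi a c n * (r (n + 1) - r n) := by nlinarith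
      have hrn : 0 < r n := by linarith
      have hrn1 : 0 < r (n+1) := by linarith
      have hA := ha n
      have hP := hpi n
      have : (1 / z) * (1 / r n - 1 / r (n + 1))
          = (a n * auxpi a c n * (r (n + 1) - r n)) / z / X := by
        rw [hX]; field_simp
      rw [this]
      apply div_le_div_of_nonneg_right _ hXpos.le
      rw [le_div_iff₀ hz]; linarith
    have f2 : X ≤ N ^ 2 * ((auxpi a c n * r n ^ 2 + auxpi a c (n + 1) * r (n + 1) ^ 2) / 2) := by
      set w := auxpi a c n * r n ^ 2 with hw
      set v := auxpi a c (n + 1) * r (n + 1) ^ 2 with hv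
      have hw0 : 0 < w := by have := hpi n; positivity
      have hv0 : 0 < v := by have := hpi (n+1); positivity
      have e : X ^ 2 = (a n * c (n + 1)) * (w * v) := by
        have := auxpi_succ a c hc n
        rw [hX, hw, hv]
        linear_combination -(a n * auxpi a c n * r n ^ 2 * r (n+1) ^ 2) * this
      have hac : a n * c (n + 1) ≤ N ^ 2 * N ^ 2 :=
        mul_le_mul (haK n) (hcK n) (hc n).le (by positivity)
      apply le_of_sq_le_sq _ (by positivity)
      calc X ^ 2 = (a n * c (n + 1)) * (w * v) := e
        _ ≤ (N ^ 2 * N ^ 2) * (w * v) := mul_le_mul_of_nonneg_right hac (by positivity)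
        _ ≤ (N ^ 2 * N ^ 2) * ((w + v) / 2) ^ 2 :=
            mul_le_mul_of_nonneg_left (by nlinarith [sq_nonneg (w - v)]) (by positivity)
        _ = _ := by ring
    have f3 : 2 / N ≤ X / N ^ 2 + 1 / X := by
      have : X / N ^ 2 + 1 / X - 2 / N = (X - N) ^ 2 / (N ^ 2 * X) := by field_simp; ring
      have h0 : 0 ≤ (X - N) ^ 2 / (N ^ 2 * X) := by positivity
      linarith
    have f4 : X / N ^ 2 ≤ (auxpi a c n * r n ^ 2 + auxpi a c (n + 1) * r (n + 1) ^ 2) / 2 := by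
      rw [div_le_iff₀ (by positivity)]; linarith
    have f5 : (2 / K) * (1 / ((n : ℝ) + 1)) = 2 / N := by rw [hNdef]; field_simp
    rw [f5]; linarith
  have sumkey : ∀ M : ℕ, (2 / K) * ∑ n ∈ Finset.range M, (1 / ((n : ℝ) + 1)) ≤
      ∑ n ∈ Finset.range (M + 1), auxpi a c n * r n ^ 2 + 1 / z := by
    intro M
    rw [Finset.mul_sum]
    refine (Finset.sum_le_sum fun n _ => key n).trans ?_
    rw [Finset.sum_add_distrib, ← Finset.mul_sum, Finset.sum_range_sub' (fun n => 1 / r n),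
      ← Finset.sum_div, Finset.sum_add_distrib]
    have g1 := Finset.sum_range_succ (fun n => auxpi a c n * r n ^ 2) M
    have g2 := Finset.sum_range_succ' (fun n => auxpi a c n * r n ^ 2) M
    have g3 : 0 ≤ auxpi a c M * r M ^ 2 := by have := hpi M; positivity
    have g4 : 0 ≤ auxpi a c 0 * r 0 ^ 2 := by have := hpi 0; positivity
    have g5 : 1 / z * (1 / r 0 - 1 / r M) ≤ 1 / z := by
      have hrM := (hm M).1.1
      have : 0 ≤ 1 / r M := by positivity
      rw [hr0]
      have hz' : 0 < 1 / z := by positivity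
      nlinarith
    linarith
  have hdiv := Real.tendsto_sum_range_one_div_nat_succ_atTop
  obtain ⟨M, hM⟩ := (hdiv.eventually_gt_atTop ((B + 1 / z) / (2 / K))).exists
  refine ⟨M + 1, ?_⟩
  have h := sumkey M
  rw [div_lt_iff₀ (by positivity)] at hM
  linarith

open MeasureTheory Polynomial in
/-- The birth-and-death orthogonality situation at `x0` for the weight `f`. -/
structure AuxState (μ : Measure ℝ) (a c : ℕ → ℝ) (x0 : ℝ) (f : Polynomial ℝ)
    (r : ℕ → Polynomial ℝ) : Prop where
  r0 : r 0 = 1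
  hrec : ∀ n, (X - C x0) * r n = C (a n) * (r n - r (n + 1)) + C (c n) * (r n - r (n - 1))
  orth : ∀ m n, m ≠ n → ∫ y, (r m * r n * f).eval y ∂μ = 0
  pos : ∀ᵐ y ∂μ, 0 ≤ f.eval y

open MeasureTheory Polynomial in
/-- the functional -/
noncomputable def auxL (μ : Measure ℝ) (hI : ∀ P : Polynomial ℝ, Integrable (fun y => P.eval y) μ) :
    Polynomial ℝ →ₗ[ℝ] ℝ where
  toFun P := ∫ y, P.eval y ∂μ
  map_add' P Q := by simpa using integral_add (hI P) (hI Q)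
  map_smul' t P := by simp [integral_const_mul]

open MeasureTheory Polynomial in
theorem aux_norm (μ : Measure ℝ) (hI : ∀ P : Polynomial ℝ, Integrable (fun y => P.eval y) μ)
    (a c : ℕ → ℝ) (ha : ∀ n, 0 < a n) (hc : ∀ n, 0 < c (n + 1))
    (x0 : ℝ) (f : Polynomial ℝ) (r : ℕ → Polynomial ℝ)
    (S : AuxState μ a c x0 f r) (n : ℕ) :
    auxpi a c n * auxL μ hI (r n * r n * f) = auxL μ hI f := by
  have orth : ∀ m n, m ≠ n → auxL μ hI (r m * r n * f) = 0 := S.orth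
  induction n with
  | zero => simp [auxpi_zero, S.r0]
  | succ n ih =>
    have e1 : (X - C x0) * r n * r (n+1) * f = a n • (r n * r (n+1) * f) - a n • (r (n+1) * r (n+1) * f)
       + c n • (r n * r (n+1) * f) - c n • (r (n-1) * r (n+1) * f) := by
      rw [S.hrec n]; simp only [smul_eq_C_mul]; ring
    have e2 : (X - C x0) * r n * r (n+1) * f = a (n+1) • (r (n+1) * r n * f) - a (n+1) • (r (n+1+1) * r n * f)
       + c (n+1) • (r (n+1) * r n * f) - c (n+1) • (r n * r n * f) := by
      have := S.hrec (n+1)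
      simp only [Nat.add_sub_cancel] at this
      rw [mul_right_comm _ (r n), this]; simp only [smul_eq_C_mul]; ring
    have e := congrArg (auxL μ hI) (e1.symm.trans e2)
    simp only [map_add, map_sub, map_smul, smul_eq_mul] at e
    rw [orth n (n+1) (by omega), orth (n-1) (n+1) (by omega), orth (n+1) n (by omega),
      orth (n+1+1) n (by omega)] at e
    have h2 := auxpi_succ a c hc n
    apply mul_left_cancel₀ (hc n).ne'
    rw [← mul_assoc, h2, ← ih]
    linear_combination -(auxpi a c n) * e

open MeasureTheory Polynomial in
theorem aux_step_pos (μ : Measure ℝ) (hI : ∀ P : Polynomial ℝ, Integrable (fun y => P.eval y) μ)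
    (a c : ℕ → ℝ) (ha : ∀ n, 0 < a n) (hc : ∀ n, 0 < c (n + 1)) (hc0 : c 0 = 0)
    (K : ℝ) (hK : 0 < K) (haK : ∀ n : ℕ, a n ≤ (K * (n + 1)) ^ 2)
    (hcK : ∀ n : ℕ, c (n + 1) ≤ (K * (n + 1)) ^ 2)
    (x0 : ℝ) (f : Polynomial ℝ) (r : ℕ → Polynomial ℝ)
    (S : AuxState μ a c x0 f r) : ∀ᵐ y ∂μ, 0 ≤ ((X - C x0) * f).eval y := by
  have hrecE : ∀ (y : ℝ) (n : ℕ), (-(x0 - y)) * (r n).eval y =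
      a n * ((r n).eval y - (r (n+1)).eval y) + c n * ((r n).eval y - (r (n-1)).eval y) := by
    intro y n
    have := congrArg (Polynomial.eval y) (S.hrec n)
    simp at this
    rw [← this]; ring
  have hr0E : ∀ y : ℝ, (r 0).eval y = 1 := by intro y; simp [S.r0]
  have hpi := auxpi_pos a c ha hc
  have h0 : 0 ≤ auxL μ hI f := integral_nonneg_of_ae S.pos
  have main : ∀ ε : ℝ, 0 < ε → ∀ᵐ y ∂μ, y ≤ x0 - ε → f.eval y = 0 := by
    intro ε hε
    set y0 := x0 - ε with hy0
    have hz0 : x0 - y0 = ε := by rw [hy0]; ring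
    have hm : ∀ y ≤ y0, ∀ n, 1 ≤ (r n).eval y0 ∧ (r n).eval y0 ≤ (r n).eval y := fun y hy n =>
      (aux_mono a c ha hc hc0 (x0 - y0) (x0 - y) (by linarith) (by linarith)
        (fun n => (r n).eval y0) (fun n => (r n).eval y) (hr0E _) (hr0E _) (hrecE _) (hrecE _) n).1
    have hbound : ∀ M, (∑ n ∈ Finset.range M, auxpi a c n * (r n).eval y0 ^ 2) ^ 2 *
        (∫ y in Set.Iic y0, f.eval y ∂μ) ≤
        (∑ n ∈ Finset.range M, auxpi a c n * (r n).eval y0 ^ 2) * auxL μ hI f := by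
      intro M
      set T := ∑ n ∈ Finset.range M, auxpi a c n * (r n).eval y0 ^ 2 with hT
      set Q : Polynomial ℝ := ∑ n ∈ Finset.range M, (auxpi a c n * (r n).eval y0) • r n with hQ
      have hT0 : 0 ≤ T := Finset.sum_nonneg fun n _ => by have := hpi n; positivity
      have hQT : ∀ y ≤ y0, T ≤ Q.eval y := by
        intro y hy
        rw [hT, hQ, Polynomial.eval_finsetSum]
        apply Finset.sum_le_sum
        intro n _
        have h := hm y hy n
        rw [Polynomial.eval_smul, smul_eq_mul, sq, ← mul_assoc]
        exact mul_le_mul_of_nonneg_left h.2 (mul_nonneg (hpi n).le (by linarith))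
      have hQQ : auxL μ hI (Q * Q * f) = T * auxL μ hI f := by
        have : Q * Q * f = ∑ n ∈ Finset.range M, ∑ m ∈ Finset.range M,
            ((auxpi a c n * (r n).eval y0) * (auxpi a c m * (r m).eval y0)) • (r n * r m * f) := by
          rw [hQ, Finset.sum_mul_sum, Finset.sum_mul]
          apply Finset.sum_congr rfl; intro n _
          rw [Finset.sum_mul]
          apply Finset.sum_congr rfl; intro m _
          simp only [smul_eq_C_mul, C_mul]; ring
        rw [this, map_sum, hT, Finset.sum_mul]
        apply Finset.sum_congr rfl; intro n hn
        rw [map_sum, Finset.sum_eq_single n]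
        · rw [map_smul, smul_eq_mul]
          linear_combination (auxpi a c n * (r n).eval y0 ^ 2) * aux_norm μ hI a c ha hc x0 f r S n
        · intro m _ hmn
          rw [map_smul]
          have : auxL μ hI (r n * r m * f) = 0 := S.orth n m hmn.symm
          rw [this, smul_zero]
        · intro h; exact absurd hn h
      rw [← hQQ, ← integral_const_mul]
      calc ∫ y in Set.Iic y0, T ^ 2 * f.eval y ∂μ
          ≤ ∫ y in Set.Iic y0, (Q * Q * f).eval y ∂μ := by
            apply integral_mono_ae ((hI f).integrableOn.const_mul _) (hI _).integrableOn
            filter_upwards [ae_restrict_of_ae S.pos, ae_restrict_mem measurableSet_Iic] with y hy hy'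
            simp only [eval_mul]
            apply mul_le_mul_of_nonneg_right _ hy
            have := hQT y hy'
            nlinarith
        _ ≤ ∫ y, (Q * Q * f).eval y ∂μ := by
            apply setIntegral_le_integral (hI _)
            filter_upwards [S.pos] with y hy
            simp only [eval_mul, Pi.zero_apply]
            exact mul_nonneg (mul_self_nonneg _) hy
    have hJ0 : 0 ≤ ∫ y in Set.Iic y0, f.eval y ∂μ :=
      integral_nonneg_of_ae (ae_restrict_of_ae S.pos)
    have hJ : ∫ y in Set.Iic y0, f.eval y ∂μ = 0 := by
      by_contra hne
      have hJp : 0 < ∫ y in Set.Iic y0, f.eval y ∂μ := lt_of_le_of_ne hJ0 (Ne.symm hne)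
      obtain ⟨M, hM⟩ := aux_div a c ha hc hc0 K hK haK hcK (x0 - y0) (by linarith)
        (fun n => (r n).eval y0) (hr0E _) (hrecE _)
        (auxL μ hI f / ∫ y in Set.Iic y0, f.eval y ∂μ)
      have hb := hbound M
      have hTp := lt_of_le_of_lt (div_nonneg h0 hJ0) hM
      rw [div_lt_iff₀ hJp] at hM
      have := mul_lt_mul_of_pos_left hM hTp
      nlinarith
    rw [setIntegral_eq_zero_iff_of_nonneg_ae (ae_restrict_of_ae S.pos) (hI f).integrableOn] at hJ
    rw [Filter.EventuallyEq, ae_restrict_iff' measurableSet_Iic] at hJ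
    filter_upwards [hJ] with y hy hy'
    exact hy hy'
  have main2 : ∀ᵐ y ∂μ, ∀ n : ℕ, y ≤ x0 - 1 / ((n:ℝ) + 1) → f.eval y = 0 :=
    ae_all_iff.mpr fun n => main _ (by positivity)
  filter_upwards [main2, S.pos] with y h1 h2
  simp only [eval_mul, eval_sub, eval_X, eval_C]
  by_cases hy : x0 ≤ y
  · exact mul_nonneg (by linarith) h2
  · push Not at hy
    obtain ⟨n, hn⟩ := exists_nat_one_div_lt (sub_pos.mpr hy)
    rw [h1 n (by linarith)]; simp

open MeasureTheory Polynomial in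
theorem aux_step_next (μ : Measure ℝ) (hI : ∀ P : Polynomial ℝ, Integrable (fun y => P.eval y) μ)
    (a c : ℕ → ℝ) (ha : ∀ n, 0 < a n) (hc : ∀ n, 0 < c (n + 1)) (hc0 : c 0 = 0)
    (x0 : ℝ) (f : Polynomial ℝ) (r : ℕ → Polynomial ℝ)
    (S : AuxState μ a c x0 f r) (hpos : ∀ᵐ y ∂μ, 0 ≤ ((X - C x0) * f).eval y)
    (a' c' : ℕ → ℝ) (x1 : ℝ) (ha' : ∀ n, 0 < a' n) (hc0' : c' 0 = 0)
    (h1 : ∀ n, a' n * c' (n + 1) = a (n + 1) * c (n + 1))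
    (h2 : ∀ n, a n + c (n + 1) - (x1 - x0) = a' n + c' n) :
    ∃ r', AuxState μ a' c' x1 ((X - C x0) * f) r' := by
  have orth : ∀ m n, m ≠ n → auxL μ hI (r m * r n * f) = 0 := S.orth
  set R : ℕ → Polynomial ℝ := fun n => ∑ k ∈ Finset.range (n + 1), C (auxpi a c k) * r k with hR
  have hflux : ∀ n, (X - C x0) * R n = C (a n * auxpi a c n) * (r n - r (n + 1)) := by
    intro n
    apply Polynomial.funext
    intro y
    have := aux_flux a c hc hc0 (y - x0) (fun n => (r n).eval y) (by
      intro n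
      have := congrArg (Polynomial.eval y) (S.hrec n)
      simpa using this) n
    simp only [hR, eval_mul, eval_sub, eval_X, eval_C, Polynomial.eval_finsetSum]
    exact this
  have hRs : ∀ n, R (n + 1) = R n + C (auxpi a c (n + 1)) * r (n + 1) := by
    intro n; simp only [hR]; rw [Finset.sum_range_succ]
  have hR0 : R 0 = 1 := by simp [hR, auxpi_zero, S.r0]
  have hpi := auxpi_pos a c ha hc
  set g : ℕ → ℝ := auxpi a' c with hg
  have hgpos : ∀ n, 0 < g n := auxpi_pos a' c ha' hc
  have hgs : ∀ n, c (n + 1) * g (n + 1) = a' n * g n := auxpi_succ a' c hc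
  have horthR : ∀ m n, m < n → auxL μ hI (R m * R n * ((X - C x0) * f)) = 0 := by
    intro m n hmn
    have : R m * R n * ((X - C x0) * f) = ∑ k ∈ Finset.range (m + 1),
        ((auxpi a c k * (a n * auxpi a c n)) • (r k * r n * f) -
          (auxpi a c k * (a n * auxpi a c n)) • (r k * r (n+1) * f)) := by
      calc R m * R n * ((X - C x0) * f) = R m * ((X - C x0) * R n) * f := by ring
        _ = _ := by
          rw [hflux n]
          simp only [hR]
          rw [Finset.sum_mul, Finset.sum_mul]
          apply Finset.sum_congr rfl; intro k _
          simp only [smul_eq_C_mul, C_mul]; ring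
    rw [this, map_sum]
    apply Finset.sum_eq_zero
    intro k hk
    rw [Finset.mem_range] at hk
    rw [map_sub, map_smul, map_smul, orth k n (by omega), orth k (n+1) (by omega)]
    simp
  have hrecR : ∀ n, (X - C x0) * R n = C (a n) * (C (auxpi a c n) * r n)
      - C (c (n+1)) * (R (n+1) - R n) := by
    intro n
    rw [hflux n, hRs n, C_mul]
    have := congrArg C (auxpi_succ a c hc n)
    simp only [C_mul] at this
    linear_combination (r (n+1)) * this
  refine ⟨fun n => C (g n)⁻¹ * R n, ?_, ?_, ?_, hpos⟩
  · simp [hR0, hg, auxpi_zero]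
  · intro n
    have hX : (X - C x1 : Polynomial ℝ) = (X - C x0) - C (x1 - x0) := by rw [C_sub]; ring
    apply Polynomial.funext
    intro y
    have hr := congrArg (Polynomial.eval y) (hrecR n)
    have hh := h2 n
    have hgn := hgpos n
    have hgn1 := hgpos (n + 1)
    have hgg := hgs n
    have i1 : a' n * (g (n+1))⁻¹ = c (n+1) * (g n)⁻¹ := by
      field_simp; linarith
    rcases n with _ | m
    · simp [hc0', hR0, S.r0, auxpi_zero] at hr hh i1 ⊢
      linear_combination (g 0)⁻¹ * hr + (g 0)⁻¹ * hh  + (R 1).eval y * i1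
    · have hgm := hgpos m
      have i2 : c' (m+1) * (g m)⁻¹ = a (m+1) * (g (m+1))⁻¹ := by
        have q1 := h1 m
        have q2 := hgs m
        have q3 := ha' m
        field_simp
        apply mul_left_cancel₀ q3.ne'
        linear_combination g (m+1) * q1 + a (m+1) * q2
      have hs := congrArg (Polynomial.eval y) (hRs m)
      simp at hr hh hs ⊢
      linear_combination (g (m+1))⁻¹ * hr + (g (m+1))⁻¹ * (R (m+1)).eval y * hh
        + (R (m+1+1)).eval y * i1 + (R m).eval y * i2 - (g (m+1))⁻¹ * a (m+1) * hs
  · intro m n hmn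
    have e : C (g m)⁻¹ * R m * (C (g n)⁻¹ * R n) * ((X - C x0) * f) =
        ((g m)⁻¹ * (g n)⁻¹) • (R m * R n * ((X - C x0) * f)) := by
      simp only [smul_eq_C_mul, C_mul]; ring
    change auxL μ hI _ = 0
    rw [e, map_smul]
    rcases lt_or_gt_of_ne hmn with h | h
    · rw [horthR m n h, smul_zero]
    · rw [mul_comm (R m), horthR n m h, smul_zero]

theorem qnum_zero' (q : ℝ) : qnum q 0 = 0 := by simp [qnum]

theorem qnum_succ' (q : ℝ) (n : ℕ) : qnum q (n + 1) = qnum q n + q ^ n := by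
  simp [qnum, Finset.sum_range_succ]

theorem qnum_pow (q : ℝ) (n : ℕ) : q ^ n = 1 - (1 - q) * qnum q n := by
  induction n with
  | zero => simp [qnum]
  | succ n ih => rw [qnum_succ']; rw [pow_succ]; linear_combination ih

theorem qnum_nonneg (q : ℝ) (hq : 0 ≤ q) (n : ℕ) : 0 ≤ qnum q n :=
  Finset.sum_nonneg fun i _ => pow_nonneg hq i

theorem qnum_le (q : ℝ) (hq : 0 ≤ q) (hq1 : q ≤ 1) (n : ℕ) : qnum q n ≤ n := by
  unfold qnum
  calc _ ≤ ∑ i ∈ Finset.range n, (1:ℝ) := Finset.sum_le_sum fun i _ => pow_le_one₀ hq hq1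
    _ = n := by simp

theorem qnum_succ_pos (q : ℝ) (hq : 0 ≤ q) (n : ℕ) : 0 < qnum q (n + 1) := by
  unfold qnum
  rw [Finset.sum_range_succ']
  have : 0 ≤ ∑ i ∈ Finset.range n, q ^ (i + 1) := Finset.sum_nonneg fun i _ => pow_nonneg hq _
  simp; linarith

theorem qnum_add (q : ℝ) (n k : ℕ) : qnum q (n + k) = qnum q n + q ^ n * qnum q k := by
  induction k with
  | zero => simp [qnum]
  | succ k ih => rw [← add_assoc, qnum_succ', ih, qnum_succ', pow_add]; ring

theorem aux_rel (η θ τ q s : ℝ) (hq : 0 < q) (hη : 0 < η) (k n : ℕ) :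
    aCoef η θ τ q (n + k) / q ^ k + q ^ k * cCoef η τ q s (n + 1)
      - (xPt η θ τ q s (k + 1) - xPt η θ τ q s k)
      = aCoef η θ τ q (n + (k + 1)) / q ^ (k + 1) + q ^ (k + 1) * cCoef η τ q s n := by
  have hc : q * cCoef η τ q s n = q * η * s * qnum q n + η * τ * (qnum q n - 1) * qnum q n := by
    rcases n with _ | m
    · simp [cCoef, qnum_zero']
    · have := qnum_pow q m
      simp only [cCoef, Nat.add_sub_cancel]
      rw [qnum_succ', this]; ring
  have hc' : q ^ (k+1) * cCoef η τ q s n = q ^ k * (q * cCoef η τ q s n) := by ring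
  rw [hc', hc]
  simp only [cCoef, aCoef, xPt, Nat.add_sub_cancel]
  rw [← add_assoc n k 1, qnum_succ' q (n + k), qnum_succ' q n, qnum_succ' q k, qnum_add,
    pow_add q n k, pow_succ q k, qnum_pow q n]
  have hQ := qnum_pow q k
  have hQpos : 0 < q ^ k := pow_pos hq k
  generalize q ^ k = Q at *
  generalize qnum q n = v at *
  generalize qnum q k = u at *
  field_simp
  subst hQ
  ring

theorem aCoef_pos (η θ τ q : ℝ) (hq0 : 0 ≤ q) (hη : 0 < η) (hθ : 0 ≤ θ) (hτ : 0 ≤ τ) (n : ℕ) :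
    0 < aCoef η θ τ q n := by
  have := qnum_nonneg q hq0 n
  unfold aCoef; positivity

theorem cCoef_pos (η τ q s : ℝ) (hq0 : 0 ≤ q) (hη : 0 < η) (hτ : 0 ≤ τ) (hs : 0 < s) (n : ℕ) :
    0 < cCoef η τ q s (n + 1) := by
  have := qnum_succ_pos q hq0 n
  have := qnum_nonneg q hq0 n
  simp only [cCoef, Nat.add_sub_cancel]; positivity

theorem aux_bounds (η θ τ q s : ℝ) (hq0 : 0 ≤ q) (hq1 : q ≤ 1) (hη : 0 < η) (hθ : 0 ≤ θ)
    (hτ : 0 ≤ τ) (hs : 0 < s) (k : ℕ) (Q : ℝ) (hQ : 0 < Q) :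
    ∃ K : ℝ, 0 < K ∧ (∀ n : ℕ, aCoef η θ τ q (n + k) / Q ≤ (K * (n + 1)) ^ 2) ∧
      (∀ n : ℕ, Q * cCoef η τ q s (n + 1) ≤ (K * (n + 1)) ^ 2) := by
  set B : ℝ := 1 + (η⁻¹ + θ * (k + 1) + (k + 1) ^ 2 * η * τ) / Q + Q * (η * (s + τ)) with hB
  have hB1 : 0 ≤ (η⁻¹ + θ * (k + 1) + (k + 1) ^ 2 * η * τ) / Q := by positivity
  have hB2 : 0 ≤ Q * (η * (s + τ)) := by positivity
  have hB0 : 1 ≤ B := by linarith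
  refine ⟨B, by linarith, fun n => ?_, fun n => ?_⟩
  · have h1 := qnum_le q hq0 hq1 (n + k)
    have h0 := qnum_nonneg q hq0 (n + k)
    have hN : (1:ℝ) ≤ n + 1 := by linarith [(Nat.cast_nonneg n : (0:ℝ) ≤ n)]
    have hk : (0:ℝ) ≤ k := Nat.cast_nonneg k
    have h2 : qnum q (n + k) ≤ (k + 1) * (n + 1) := by
      push_cast at h1; nlinarith
    have h3 : aCoef η θ τ q (n + k) ≤
        (η⁻¹ + θ * (k + 1) + (k + 1) ^ 2 * η * τ) * ((n:ℝ) + 1) ^ 2 := by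
      unfold aCoef
      have hN2 : (n:ℝ) + 1 ≤ ((n:ℝ) + 1) ^ 2 := by nlinarith
      have e1 : η⁻¹ ≤ η⁻¹ * ((n:ℝ) + 1) ^ 2 :=
        le_mul_of_one_le_right (by positivity) (by linarith)
      have e2 : θ * qnum q (n + k) ≤ θ * ((k + 1) * ((n:ℝ) + 1) ^ 2) := by
        apply mul_le_mul_of_nonneg_left _ hθ
        exact h2.trans (mul_le_mul_of_nonneg_left hN2 (by positivity))
      have e3 : qnum q (n + k) ^ 2 * η * τ ≤ ((k + 1) * ((n:ℝ) + 1)) ^ 2 * η * τ := by gcongr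
      linarith
    calc aCoef η θ τ q (n + k) / Q
        ≤ (η⁻¹ + θ * (k + 1) + (k + 1) ^ 2 * η * τ) * ((n:ℝ) + 1) ^ 2 / Q := by gcongr
      _ = (η⁻¹ + θ * (k + 1) + (k + 1) ^ 2 * η * τ) / Q * ((n:ℝ) + 1) ^ 2 := by ring
      _ ≤ B ^ 2 * ((n:ℝ) + 1) ^ 2 := by
          apply mul_le_mul_of_nonneg_right _ (by positivity)
          nlinarith
      _ = _ := by ring
  · have h1 := qnum_le q hq0 hq1 (n + 1)
    have h1' := qnum_le q hq0 hq1 n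
    have h0 := qnum_nonneg q hq0 (n + 1)
    have h0' := qnum_nonneg q hq0 n
    have hn : (0:ℝ) ≤ n := Nat.cast_nonneg n
    push_cast at h1
    calc Q * cCoef η τ q s (n + 1) = Q * (η * (s + τ * qnum q n) * qnum q (n + 1)) := by
          simp [cCoef]
      _ ≤ Q * (η * (s * (n + 1) + τ * (n + 1)) * (n + 1)) := by
          gcongr
          · nlinarith
          · linarith
      _ = Q * (η * (s + τ)) * ((n:ℝ) + 1) ^ 2 := by ring
      _ ≤ B ^ 2 * ((n:ℝ) + 1) ^ 2 := by
          apply mul_le_mul_of_nonneg_right _ (by positivity)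
          nlinarith
      _ = _ := by ring

open MeasureTheory

/-- for `0 ≤ q ≤ 1`, `η > 0`, `θ ≥ 0`, `τ ≥ 0`, `s > 0`, if `x` belongs to the
topological support of an orthogonality measure `μ_s` of `{p_n(·;s)}` (every open
neighborhood of `x` has positive measure), then `∏_{j=0}^n A_j(x,s) ≥ 0` for every `n ≥ 0`. -/
theorem stmt15 (η θ τ q s : ℝ)
    (hq0 : 0 ≤ q) (hq1 : q ≤ 1) (hη : 0 < η) (hθ : 0 ≤ θ) (hτ : 0 ≤ τ) (hs : 0 < s)
    (p : ℕ → ℝ → ℝ)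
    (hp0 : ∀ y : ℝ, p 0 y = 1)
    (hprec : ∀ (n : ℕ) (y : ℝ), y * p n y =
      aCoef η θ τ q n * p (n + 1) y + bCoef η θ τ q s n * p n y
        + cCoef η τ q s n * p (n - 1) y)
    (μ : Measure ℝ)
    (hprob : IsProbabilityMeasure μ)
    (hmom : ∀ n : ℕ, Integrable (fun y : ℝ => |y| ^ n) μ)
    (horth : ∀ m n : ℕ, m ≠ n → ∫ y, p m y * p n y ∂μ = 0)
    (x : ℝ)
    (hsupp : ∀ U : Set ℝ, IsOpen U → x ∈ U → 0 < μ U) :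
    ∀ n : ℕ, 0 ≤ ∏ j ∈ Finset.range (n + 1), ACoef η θ τ q x s j := by
  have hI := aux_poly_int μ hprob hmom
  have hapos := aCoef_pos η θ τ q hq0 hη hθ hτ
  have hcpos := cCoef_pos η τ q s hq0 hη hτ hs
  have hc0 : cCoef η τ q s 0 = 0 := by simp [cCoef, qnum_zero']
  have hex : ∀ n, (∃ P : Polynomial ℝ, ∀ y, P.eval y = p n y) ∧
      (∃ P : Polynomial ℝ, ∀ y, P.eval y = p (n + 1) y) := by
    have hnext : ∀ n, (∃ P : Polynomial ℝ, ∀ y, P.eval y = p n y) →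
        (∃ P : Polynomial ℝ, ∀ y, P.eval y = p (n - 1) y) →
        (∃ P : Polynomial ℝ, ∀ y, P.eval y = p (n + 1) y) := by
      rintro n ⟨P, hP⟩ ⟨Q, hQ⟩
      refine ⟨Polynomial.C (aCoef η θ τ q n)⁻¹ * (Polynomial.X * P
        - Polynomial.C (bCoef η θ τ q s n) * P - Polynomial.C (cCoef η τ q s n) * Q), fun y => ?_⟩
      have h := hprec n y
      have ha := (hapos n).ne'
      simp only [Polynomial.eval_mul, Polynomial.eval_sub, Polynomial.eval_C, Polynomial.eval_X,
        hP, hQ]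
      rw [inv_mul_eq_iff_eq_mul₀ ha]
      linarith
    intro n
    induction n with
    | zero =>
      have h0 : ∃ P : Polynomial ℝ, ∀ y, P.eval y = p 0 y := ⟨1, fun y => by simp [hp0]⟩
      exact ⟨h0, hnext 0 h0 h0⟩
    | succ n ih => exact ⟨ih.2, hnext (n + 1) ih.2 ih.1⟩
  choose P hP using fun n => (hex n).1
  have hab : ∀ n, bCoef η θ τ q s n = aCoef η θ τ q n + cCoef η τ q s n - η⁻¹ := by
    intro n
    unfold bCoef aCoef cCoef; ring
  -- initial state
  have S0 : AuxState μ (aCoef η θ τ q) (cCoef η τ q s) (-η⁻¹) 1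
      (fun n => Polynomial.C ((-1) ^ n) * P n) := by
    refine ⟨?_, ?_, ?_, ?_⟩
    · apply Polynomial.funext; intro y; simp [hP, hp0]
    · intro n
      apply Polynomial.funext; intro y
      have h := hprec n y
      rw [hab] at h
      rcases n with _ | m
      · simp [hP, hc0] at h ⊢
        linear_combination h
      · simp only [Nat.add_sub_cancel] at h
        simp only [Polynomial.eval_mul, Polynomial.eval_sub, Polynomial.eval_add,
          Polynomial.eval_C, Polynomial.eval_X, hP, Nat.add_sub_cancel, pow_succ]
        linear_combination (-1) ^ (m + 1) * h
    · intro m n hmn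
      have := horth m n hmn
      have e : ∀ y, (Polynomial.C ((-1) ^ m) * P m * (Polynomial.C ((-1) ^ n) * P n) * 1).eval y
          = ((-1) ^ m * (-1) ^ n) * (p m y * p n y) := by
        intro y
        simp only [Polynomial.eval_mul, Polynomial.eval_C, hP, Polynomial.eval_one]; ring
      simp only [e]
      rw [integral_const_mul, this, mul_zero]
    · filter_upwards with y; simp
  -- it is enough to have positivity almost everywhere
  have red : ∀ n, (∀ᵐ y ∂μ, 0 ≤ ∏ j ∈ Finset.range (n + 1), ACoef η θ τ q y s j) →
      0 ≤ ∏ j ∈ Finset.range (n + 1), ACoef η θ τ q x s j := by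
    intro n hae
    by_contra hneg
    push Not at hneg
    have hcont : Continuous fun y => ∏ j ∈ Finset.range (n + 1), ACoef η θ τ q y s j := by
      unfold ACoef; fun_prop
    have hpos := hsupp _ (isOpen_lt hcont continuous_const) hneg
    have hz : μ {y | (∏ j ∈ Finset.range (n + 1), ACoef η θ τ q y s j) < 0} = 0 := by
      have := ae_iff.mp hae
      simpa only [not_le] using this
    exact absurd hz hpos.ne'
  rcases hq0.eq_or_lt with hq | hq
  · -- the case q = 0
    obtain ⟨K, hK, haK, hcK⟩ := aux_bounds η θ τ q s hq0 hq1 hη hθ hτ hs 0 1 one_pos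
    simp only [add_zero, div_one, one_mul] at haK hcK
    have hp := aux_step_pos μ hI _ _ hapos hcpos hc0 K hK haK hcK _ _ _ S0
    intro n
    apply red
    filter_upwards [hp] with y hy
    simp at hy
    apply Finset.prod_nonneg
    intro j _
    rcases j with _ | j
    · simp [ACoef, aCoef, qnum_zero']; linarith
    · have := hapos (j + 1)
      unfold ACoef
      rw [← hq] at this ⊢
      simp; exact this.le
  · -- the case q > 0
    have hstate : ∀ k : ℕ, ∃ r, AuxState μ (fun n => aCoef η θ τ q (n + k) / q ^ k)
        (fun n => q ^ k * cCoef η τ q s n) (xPt η θ τ q s k)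
        (∏ j ∈ Finset.range k, (Polynomial.X - Polynomial.C (xPt η θ τ q s j))) r := by
      intro k
      induction k with
      | zero =>
        refine ⟨fun n => Polynomial.C ((-1) ^ n) * P n, ?_⟩
        · have e : xPt η θ τ q s 0 = -η⁻¹ := by simp [xPt, qnum_zero']
          simpa [e] using S0
      | succ k ih =>
        obtain ⟨r, S⟩ := ih
        have hQ : 0 < q ^ k := pow_pos hq k
        have hQ1 : 0 < q ^ (k + 1) := pow_pos hq (k + 1)
        obtain ⟨K, hK, haK, hcK⟩ := aux_bounds η θ τ q s hq0 hq1 hη hθ hτ hs k (q ^ k) hQ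
        have ha1 : ∀ n, 0 < aCoef η θ τ q (n + k) / q ^ k := fun n => div_pos (hapos _) hQ
        have hc1 : ∀ n, 0 < q ^ k * cCoef η τ q s (n + 1) := fun n => mul_pos hQ (hcpos n)
        have hc01 : q ^ k * cCoef η τ q s 0 = 0 := by rw [hc0, mul_zero]
        have hp := aux_step_pos μ hI _ _ ha1 hc1 hc01 K hK haK hcK _ _ _ S
        have := aux_step_next μ hI _ _ ha1 hc1 hc01 _ _ _ S hp
          (fun n => aCoef η θ τ q (n + (k + 1)) / q ^ (k + 1))
          (fun n => q ^ (k + 1) * cCoef η τ q s n) (xPt η θ τ q s (k + 1))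
          (fun n => div_pos (hapos _) hQ1) (by simp [hc0])
          (fun n => by
            have : n + 1 + k = n + (k + 1) := by ring
            simp only [this]
            field_simp)
          (fun n => aux_rel η θ τ q s hq hη k n)
        rw [Finset.prod_range_succ, mul_comm]
        exact this
    intro n
    apply red
    obtain ⟨r, S⟩ := hstate (n + 1)
    filter_upwards [S.pos] with y hy
    rw [Polynomial.eval_prod] at hy
    have e : ∀ j, ACoef η θ τ q y s j
        = q ^ j * (Polynomial.X - Polynomial.C (xPt η θ τ q s j)).eval y := by
      intro j
      have hQ : 0 < q ^ j := pow_pos hq j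
      simp only [ACoef, aCoef, xPt, Polynomial.eval_sub, Polynomial.eval_X, Polynomial.eval_C]
      field_simp
      ring
    rw [Finset.prod_congr rfl fun j _ => e j, Finset.prod_mul_distrib]
    exact mul_nonneg (Finset.prod_nonneg fun j _ => (pow_pos hq j).le) hy
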